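/- For real x, t with t ≠ 0 and real k, the principal value integral (1/π) p.v. ∫_{-∞}^{∞} e^{-i q² t + i q x} / (q - k) dq equals i · erf(ζ (x - 2kt)) · e^{-i k² t + i k x}, where ζ = e^{-i (π/4) sgn(t)} / (2√|t|) and erf is the (complex-argument) error function erf(z) = (2/√π) ∫_0^z e^{-s²} ds. -/

import Mathlib

open Filter MeasureTheory

/-- Complex error function along the straight segment from `0` to `z`:
`erf(z) = (2/√π) ∫₀^z e^{-s²} ds = (2/√π) z ∫₀¹ e^{-(sz)²} ds`. -/
noncomputable def cerf (z : ℂ) : ℂ :=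
  (2 / Real.sqrt Real.pi : ℂ) * (z * ∫ s in (0:ℝ)..1, Complex.exp (-((s : ℂ) * z) ^ 2))

/-!
After the shift `q = k + u` the integrand is `e^{-b u² + w u} / u` with `b = it` and
`w = i (x - 2kt)`, up to the constant `e^{-ik²t + ikx}`. Writing
`e^{w u} = 1 + w u ∫₀¹ e^{s w u} ds` isolates the pole in `e^{-b u²} / u`, which is odd and
integrates to `0` over the symmetric domain. What remains is `w` times the average over `s ∈ [0, 1]`
of the truncated Gaussian integrals of `e^{-b u² + s w u}`. Their tails beyond `N` are `O(1 / N)`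
uniformly in `s`, by one integration by parts, even on the boundary `Re b = 0` of the domain of
convergence. So the limit is `w ∫₀¹ √(π / b) e^{s² w² / (4b)} ds`, and as `4 b ζ² = 1` this is
`iπ erf(ζ (x - 2kt))`.
-/

section

open Complex Set Topology
open scoped Interval Real

/-- The domain of integration of a principal value at `c` with inner cutoff `ε` and outer
cutoff `N`. -/
def pvDomain (c ε N : ℝ) : Set ℝ := {q | ε ≤ |q - c| ∧ |q - c| ≤ N}

/-- The symmetrically truncated Gaussian integral `∫_{-M}^{M} e^{-b u² + w u} du`. -/
noncomputable def truncGaussian (b w : ℂ) (M : ℝ) : ℂ :=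
  ∫ u in -M..M, cexp (-b * u ^ 2 + w * u)

theorem pvDomain_eq_closedBall_diff_ball (c ε N : ℝ) :
    pvDomain c ε N = Metric.closedBall c N \ Metric.ball c ε := by
  ext q
  simp [pvDomain, Real.dist_eq, and_comm]

theorem isCompact_pvDomain (c ε N : ℝ) : IsCompact (pvDomain c ε N) := by
  rw [pvDomain_eq_closedBall_diff_ball]
  exact (isCompact_closedBall c N).diff Metric.isOpen_ball

theorem ne_of_mem_pvDomain {c ε N q : ℝ} (hε : 0 < ε) (hq : q ∈ pvDomain c ε N) : q ≠ c := by
  rintro rfl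
  exact hε.not_ge (by simpa using hq.1)

section

variable {E : Type*} [NormedAddCommGroup E] [NormedSpace ℝ E]

theorem setIntegral_pvDomain_eq_comp_add (f : ℝ → E) (c ε N : ℝ) :
    ∫ q in pvDomain c ε N, f q = ∫ u in pvDomain 0 ε N, f (c + u) := by
  rw [← (measurePreserving_add_left volume c).setIntegral_preimage_emb
    (measurableEmbedding_addLeft c)]
  simp [pvDomain]

theorem setIntegral_pvDomain_eq_zero_of_odd {f : ℝ → E} (hf : f.Odd) (ε N : ℝ) :
    ∫ u in pvDomain 0 ε N, f u = 0 := by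
  have : IsAddTorsionFree E := .of_isTorsionFree ℝ E
  refine self_eq_neg.mp ?_
  calc ∫ u in pvDomain 0 ε N, f u
      = ∫ u in pvDomain 0 ε N, f (-u) := by
        rw [← (Measure.measurePreserving_neg volume).setIntegral_preimage_emb
          (MeasurableEquiv.neg ℝ).measurableEmbedding]
        simp [pvDomain]
    _ = -∫ u in pvDomain 0 ε N, f u := by
        rw [← integral_neg]
        exact integral_congr_ae (ae_of_all _ hf)

theorem setIntegral_pvDomain_eq_sub {f : ℝ → E} (hf : Continuous f) {ε N : ℝ} (hε : 0 ≤ ε)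
    (hεN : ε ≤ N) :
    ∫ u in pvDomain 0 ε N, f u = (∫ u in -N..N, f u) - ∫ u in -ε..ε, f u := by
  rw [pvDomain_eq_closedBall_diff_ball, setIntegral_sdiff measurableSet_ball
    (hf.continuousOn.integrableOn_compact (isCompact_closedBall _ _))
    (Metric.ball_subset_closedBall.trans (Metric.closedBall_subset_closedBall hεN)),
    Real.closedBall_eq_Icc, Real.ball_eq_Ioo, intervalIntegral.integral_of_le (by linarith),
    intervalIntegral.integral_of_le (by linarith), ← integral_Icc_eq_integral_Ioc,
    ← integral_Ioc_eq_integral_Ioo]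
  simp

end

theorem cexp_eq_one_add_mul_integral (z : ℂ) :
    cexp z = 1 + z * ∫ s in (0 : ℝ)..1, cexp (s * z) := by
  have hderiv (s : ℝ) : HasDerivAt (fun s : ℝ ↦ cexp (s * z)) (z * cexp (s * z)) s := by
    simpa [mul_comm] using ((hasDerivAt_id (s : ℂ)).mul_const z).cexp.comp_ofReal
  rw [← intervalIntegral.integral_const_mul, intervalIntegral.integral_eq_sub_of_hasDerivAt
    (fun s _ ↦ hderiv s) (Continuous.intervalIntegrable (by fun_prop) _ _)]
  simp

theorem continuous_truncGaussian (M : ℝ) : Continuous fun p : ℂ × ℂ ↦ truncGaussian p.1 p.2 M :=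
  intervalIntegral.continuous_parametric_intervalIntegral_of_continuous' (by fun_prop) _ _

theorem integral_truncGaussian_mul (b w : ℂ) (M : ℝ) :
    ∫ s in (0 : ℝ)..1, truncGaussian b (s * w) M =
      ∫ u in -M..M, ∫ s in (0 : ℝ)..1, cexp (-b * u ^ 2 + s * w * u) :=
  intervalIntegral_intervalIntegral_swap <|
    ((Continuous.continuousOn (by fun_prop)).integrableOn_compact
      (isCompact_uIcc.prod isCompact_uIcc)).mono_set
      (prod_mono uIoc_subset_uIcc uIoc_subset_uIcc)

theorem setIntegral_pvDomain_cexp_quadratic_div (b w : ℂ) {ε N : ℝ} (hε : 0 < ε) (hεN : ε ≤ N) :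
    ∫ u in pvDomain 0 ε N, cexp (-b * u ^ 2 + w * u) / u =
      w * ∫ s in (0 : ℝ)..1, (truncGaussian b (s * w) N - truncGaussian b (s * w) ε) := by
  have hcont : Continuous fun u : ℝ ↦ ∫ s in (0 : ℝ)..1, cexp (-b * u ^ 2 + s * w * u) :=
    intervalIntegral.continuous_parametric_intervalIntegral_of_continuous' (by fun_prop) _ _
  have hsplit {u : ℝ} (hu : u ∈ pvDomain 0 ε N) : cexp (-b * u ^ 2 + w * u) / u =
      cexp (-b * u ^ 2) / u + w * ∫ s in (0 : ℝ)..1, cexp (-b * u ^ 2 + s * w * u) := by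
    have hu₀ : (u : ℂ) ≠ 0 := ofReal_ne_zero.mpr (ne_of_mem_pvDomain hε hu)
    simp_rw [Complex.exp_add, mul_assoc, intervalIntegral.integral_const_mul]
    rw [cexp_eq_one_add_mul_integral (w * u)]
    field_simp
  have hodd : (fun u : ℝ ↦ cexp (-b * u ^ 2) / u).Odd := fun u ↦ by simp [div_neg]
  have hint : IntegrableOn (fun u : ℝ ↦ cexp (-b * u ^ 2) / u) (pvDomain 0 ε N) :=
    ContinuousOn.integrableOn_compact (isCompact_pvDomain 0 ε N) <|
      ContinuousOn.div (by fun_prop) (by fun_prop) fun u hu ↦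
        ofReal_ne_zero.mpr (ne_of_mem_pvDomain hε hu)
  have htrunc (M : ℝ) : IntervalIntegrable (fun s : ℝ ↦ truncGaussian b (s * w) M) volume 0 1 :=
    ((continuous_truncGaussian M).comp (by fun_prop : Continuous fun s : ℝ ↦ (b, s * w)))
      |>.intervalIntegrable _ _
  rw [setIntegral_congr_fun (isCompact_pvDomain 0 ε N).measurableSet fun u hu ↦ hsplit hu,
    integral_add hint ((hcont.const_mul w).continuousOn.integrableOn_compact
      (isCompact_pvDomain 0 ε N)),
    setIntegral_pvDomain_eq_zero_of_odd hodd, zero_add, integral_const_mul,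
    setIntegral_pvDomain_eq_sub hcont hε.le hεN,
    intervalIntegral.integral_sub (htrunc N) (htrunc ε), integral_truncGaussian_mul,
    integral_truncGaussian_mul]

section Tail

variable {b w : ℂ} {M : ℝ}

theorem norm_cexp_quadratic_le_one {u : ℝ} (hM : 0 < M) (hre : |w.re| ≤ b.re * M) (hu : M ≤ u) :
    ‖cexp (-b * u ^ 2 + w * u)‖ ≤ 1 := by
  have hre_exponent : (-b * u ^ 2 + w * u).re = u * (w.re - b.re * u) := by
    rw [← ofReal_pow, add_re, re_mul_ofReal, re_mul_ofReal, neg_re]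
    ring
  have hb : 0 ≤ b.re := nonneg_of_mul_nonneg_left ((abs_nonneg _).trans hre) hM
  have hwu : w.re ≤ b.re * u := (le_abs_self _).trans (hre.trans (by gcongr))
  rw [norm_exp, hre_exponent, Real.exp_le_one_iff]
  exact mul_nonpos_of_nonneg_of_nonpos (hM.le.trans hu) (sub_nonpos.mpr hwu)

theorem norm_mul_le_norm_sub_two_mul {u : ℝ} (hM : 0 < M) (hnorm : ‖w‖ ≤ ‖b‖ * M) (hu : M ≤ u) :
    ‖b‖ * u ≤ ‖w - 2 * b * u‖ := by
  have h2 : ‖2 * b * u‖ = 2 * (‖b‖ * u) := by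
    simp [abs_of_pos (hM.trans_le hu), mul_assoc]
  have hw : ‖w‖ ≤ ‖b‖ * u := hnorm.trans (by gcongr)
  have := norm_sub_norm_le (2 * b * u) w
  rw [norm_sub_rev] at this
  linarith

theorem hasDerivAt_cexp_quadratic_div {u : ℝ} (hu : w - 2 * b * u ≠ 0) :
    HasDerivAt (fun u : ℝ ↦ cexp (-b * u ^ 2 + w * u) / (w - 2 * b * u))
      (cexp (-b * u ^ 2 + w * u) + 2 * b * cexp (-b * u ^ 2 + w * u) / (w - 2 * b * u) ^ 2) u := by
  have hphase : HasDerivAt (fun z : ℂ ↦ -b * z ^ 2 + w * z) (w - 2 * b * u) u := by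
    refine (((hasDerivAt_pow 2 (u : ℂ)).const_mul (-b)).add
      ((hasDerivAt_id (u : ℂ)).const_mul w)).congr_deriv ?_
    push_cast
    ring
  have hslope : HasDerivAt (fun z : ℂ ↦ w - 2 * b * z) (-(2 * b)) u := by
    simpa using ((hasDerivAt_id (u : ℂ)).const_mul (2 * b)).const_sub w
  refine (hphase.cexp.div hslope hu).comp_ofReal.congr_deriv ?_
  generalize w - 2 * b * u = D at hu ⊢
  field_simp
  ring

theorem integral_cexp_quadratic_eq_sub {N : ℝ} (hD : ∀ u ∈ [[M, N]], w - 2 * b * (u : ℂ) ≠ 0) :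
    ∫ u in M..N, cexp (-b * u ^ 2 + w * u) =
      cexp (-b * N ^ 2 + w * N) / (w - 2 * b * N) - cexp (-b * M ^ 2 + w * M) / (w - 2 * b * M) -
        ∫ u in M..N, 2 * b * cexp (-b * u ^ 2 + w * u) / (w - 2 * b * u) ^ 2 := by
  have hexp : IntervalIntegrable (fun u : ℝ ↦ cexp (-b * u ^ 2 + w * u)) volume M N :=
    Continuous.intervalIntegrable (by fun_prop) _ _
  have hrem : IntervalIntegrable
      (fun u : ℝ ↦ 2 * b * cexp (-b * u ^ 2 + w * u) / (w - 2 * b * u) ^ 2) volume M N :=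
    ContinuousOn.intervalIntegrable <| ContinuousOn.div (by fun_prop) (by fun_prop)
      fun u hu ↦ pow_ne_zero 2 (hD u hu)
  rw [eq_sub_iff_add_eq, ← intervalIntegral.integral_add hexp hrem]
  exact intervalIntegral.integral_eq_sub_of_hasDerivAt
    (fun u hu ↦ hasDerivAt_cexp_quadratic_div (hD u hu)) (hexp.add hrem)

theorem norm_integral_cexp_quadratic_div_sq_le {N : ℝ} (hb : b ≠ 0) (hM : 0 < M) (hMN : M ≤ N)
    (hre : |w.re| ≤ b.re * M) (hnorm : ‖w‖ ≤ ‖b‖ * M) :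
    ‖∫ u in M..N, 2 * b * cexp (-b * u ^ 2 + w * u) / (w - 2 * b * u) ^ 2‖ ≤
      2 / ‖b‖ * (1 / M - 1 / N) := by
  have h0 : (0 : ℝ) ∉ [[M, N]] := notMem_uIcc_of_lt hM (hM.trans_le hMN)
  have hpointwise {u : ℝ} (hu : M ≤ u) :
      ‖2 * b * cexp (-b * u ^ 2 + w * u) / (w - 2 * b * u) ^ 2‖ ≤ 2 / ‖b‖ * u ^ (-2 : ℤ) := by
    have hu₀ : 0 < u := hM.trans_le hu
    rw [norm_div, norm_mul, norm_mul, norm_pow, norm_ofNat]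
    calc _ ≤ 2 * ‖b‖ * 1 / (‖b‖ * u) ^ 2 := by
          gcongr
          exacts [norm_cexp_quadratic_le_one hM hre hu, norm_mul_le_norm_sub_two_mul hM hnorm hu]
      _ = 2 / ‖b‖ * u ^ (-2 : ℤ) := by rw [zpow_neg]; norm_cast; field_simp
  calc _ ≤ ∫ u in M..N, 2 / ‖b‖ * u ^ (-2 : ℤ) :=
        intervalIntegral.norm_integral_le_of_norm_le hMN
          (ae_of_all _ fun u hu ↦ hpointwise hu.1.le)
          ((intervalIntegral.intervalIntegrable_zpow (.inr h0)).const_mul _)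
    _ = 2 / ‖b‖ * (1 / M - 1 / N) := by
        rw [intervalIntegral.integral_const_mul, integral_zpow (.inr ⟨by norm_num, h0⟩)]
        have hexponent : (-2 + 1 : ℤ) = -1 := rfl
        simp only [hexponent, zpow_neg_one]
        push_cast
        ring

theorem norm_integral_cexp_quadratic_le {N : ℝ} (hb : b ≠ 0) (hM : 0 < M) (hMN : M ≤ N)
    (hre : |w.re| ≤ b.re * M) (hnorm : ‖w‖ ≤ ‖b‖ * M) :
    ‖∫ u in M..N, cexp (-b * u ^ 2 + w * u)‖ ≤ 3 / (‖b‖ * M) := by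
  have hb' : 0 < ‖b‖ := norm_pos_iff.mpr hb
  have hN : 0 < N := hM.trans_le hMN
  have hbu {u : ℝ} (hu : M ≤ u) : 0 < ‖b‖ * u := mul_pos hb' (hM.trans_le hu)
  have hD {u : ℝ} (hu : M ≤ u) : ‖b‖ * u ≤ ‖w - 2 * b * u‖ :=
    norm_mul_le_norm_sub_two_mul hM hnorm hu
  have hD₀ : ∀ u ∈ [[M, N]], w - 2 * b * (u : ℂ) ≠ 0 := by
    rw [uIcc_of_le hMN]
    exact fun u hu ↦ norm_pos_iff.mp ((hbu hu.1).trans_le (hD hu.1))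
  have hboundary {u : ℝ} (hu : M ≤ u) :
      ‖cexp (-b * u ^ 2 + w * u) / (w - 2 * b * u)‖ ≤ 1 / (‖b‖ * u) := by
    rw [norm_div]
    exact div_le_div₀ zero_le_one (norm_cexp_quadratic_le_one hM hre hu) (hbu hu) (hD hu)
  rw [integral_cexp_quadratic_eq_sub hD₀]
  calc _ ≤ 1 / (‖b‖ * N) + 1 / (‖b‖ * M) + 2 / ‖b‖ * (1 / M - 1 / N) :=
        norm_sub_le_of_le (norm_sub_le_of_le (hboundary hMN) (hboundary le_rfl))
          (norm_integral_cexp_quadratic_div_sq_le hb hM hMN hre hnorm)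
    _ = 3 / (‖b‖ * M) - 1 / (‖b‖ * N) := by field_simp; ring
    _ ≤ 3 / (‖b‖ * M) := sub_le_self _ (by positivity)

theorem norm_truncGaussian_sub_le {N : ℝ} (hb : b ≠ 0) (hM : 0 < M) (hMN : M ≤ N)
    (hre : |w.re| ≤ b.re * M) (hnorm : ‖w‖ ≤ ‖b‖ * M) :
    ‖truncGaussian b w N - truncGaussian b w M‖ ≤ 6 / (‖b‖ * M) := by
  have hint (a c : ℝ) : IntervalIntegrable (fun u : ℝ ↦ cexp (-b * u ^ 2 + w * u)) volume a c :=
    Continuous.intervalIntegrable (by fun_prop) _ _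
  have hreflect : ∫ u in -N..-M, cexp (-b * u ^ 2 + w * u) =
      ∫ u in M..N, cexp (-b * u ^ 2 + -w * u) := by
    rw [← intervalIntegral.integral_comp_neg]
    simp
  have htails : truncGaussian b w N - truncGaussian b w M =
      (∫ u in M..N, cexp (-b * u ^ 2 + -w * u)) + ∫ u in M..N, cexp (-b * u ^ 2 + w * u) := by
    rw [← hreflect, truncGaussian, truncGaussian,
      intervalIntegral.integral_interval_sub_interval_comm (hint _ _) (hint _ _) (hint _ _),
      intervalIntegral.integral_symm M N, sub_neg_eq_add]
  calc _ ≤ 3 / (‖b‖ * M) + 3 / (‖b‖ * M) := by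
        rw [htails]
        exact norm_add_le_of_le
          (norm_integral_cexp_quadratic_le hb hM hMN (by simpa using hre) (by simpa using hnorm))
          (norm_integral_cexp_quadratic_le hb hM hMN hre hnorm)
    _ = 6 / (‖b‖ * M) := by ring

theorem norm_sub_truncGaussian_le_of_re_pos (hb : 0 < b.re) (hM : 0 < M)
    (hre : |w.re| ≤ b.re * M) (hnorm : ‖w‖ ≤ ‖b‖ * M) :
    ‖(π / b) ^ (1 / 2 : ℂ) * cexp (w ^ 2 / (4 * b)) - truncGaussian b w M‖ ≤ 6 / (‖b‖ * M) := by
  have hb₀ : b ≠ 0 := by rintro rfl; simp at hb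
  have hvalue : ∫ u : ℝ, cexp (-b * u ^ 2 + w * u) =
      (π / b) ^ (1 / 2 : ℂ) * cexp (w ^ 2 / (4 * b)) := by
    simpa [div_neg] using integral_cexp_quadratic (b := -b) (by simpa using hb) w 0
  have hlim : Tendsto (truncGaussian b w) atTop
      (𝓝 ((π / b) ^ (1 / 2 : ℂ) * cexp (w ^ 2 / (4 * b)))) := by
    rw [← hvalue]
    exact intervalIntegral_tendsto_integral (by simpa using integrable_cexp_quadratic hb w 0)
      tendsto_neg_atTop_atBot tendsto_id
  refine le_of_tendsto (hlim.sub_const _).norm ?_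
  filter_upwards [eventually_ge_atTop M] with N hMN
  exact norm_truncGaussian_sub_le hb₀ hM hMN hre hnorm

theorem continuousAt_pi_div_cpow_mul_cexp (hb : 0 ≤ b.re) (hb₀ : b ≠ 0) (w : ℂ) :
    ContinuousAt (fun b : ℂ ↦ (π / b) ^ (1 / 2 : ℂ) * cexp (w ^ 2 / (4 * b))) b := by
  have hslit : (π / b : ℂ) ∈ slitPlane := by
    have hne : (π / b : ℂ) ≠ 0 := div_ne_zero (ofReal_ne_zero.mpr Real.pi_ne_zero) hb₀
    have hre : 0 ≤ (π / b : ℂ).re := by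
      rw [div_eq_mul_inv, re_ofReal_mul, inv_re]
      have := normSq_nonneg b
      positivity
    rw [mem_slitPlane_iff]
    by_contra! h
    exact hne (Complex.ext (h.1.antisymm hre) h.2)
  refine .mul (.cpow ?_ continuousAt_const hslit) (.cexp ?_) <;>
    exact continuousAt_const.div (by fun_prop) (by simpa)

theorem norm_le_norm_add_ofReal (hb : 0 ≤ b.re) {d : ℝ} (hd : 0 ≤ d) : ‖b‖ ≤ ‖b + d‖ := by
  rw [norm_def, norm_def, normSq_apply, normSq_apply]
  simp only [add_re, ofReal_re, add_im, ofReal_im, add_zero]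
  gcongr <;> linarith

theorem norm_sub_truncGaussian_le (hb : b ≠ 0) (hM : 0 < M)
    (hre : |w.re| ≤ b.re * M) (hnorm : ‖w‖ ≤ ‖b‖ * M) :
    ‖(π / b) ^ (1 / 2 : ℂ) * cexp (w ^ 2 / (4 * b)) - truncGaussian b w M‖ ≤ 6 / (‖b‖ * M) := by
  have hb_re : 0 ≤ b.re := nonneg_of_mul_nonneg_left ((abs_nonneg _).trans hre) hM
  -- The bound at `b + d`, `d > 0`, survives `d → 0` and so covers `b.re = 0`, where the integral
  -- over the whole line converges only conditionally.
  have hshift : Tendsto (fun d : ℝ ↦ b + d) (𝓝[>] 0) (𝓝 b) :=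
    tendsto_nhdsWithin_of_tendsto_nhds <| Continuous.tendsto' (by fun_prop) _ _ (by simp)
  have hcont : ContinuousAt
      (fun b : ℂ ↦ (π / b) ^ (1 / 2 : ℂ) * cexp (w ^ 2 / (4 * b)) - truncGaussian b w M) b :=
    (continuousAt_pi_div_cpow_mul_cexp hb_re hb w).sub
      ((continuous_truncGaussian M).comp (Continuous.prodMk_left w)).continuousAt
  refine le_of_tendsto (hcont.tendsto.comp hshift).norm ?_
  filter_upwards [self_mem_nhdsWithin] with d (hd : 0 < d)
  have hnorm_le : ‖b‖ ≤ ‖b + d‖ := norm_le_norm_add_ofReal hb_re hd.le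
  have hre_le : b.re ≤ (b + d).re := by simpa using hd.le
  calc _ ≤ 6 / (‖b + d‖ * M) :=
        norm_sub_truncGaussian_le_of_re_pos (by simpa using by linarith) hM
          (hre.trans (by gcongr)) (hnorm.trans (by gcongr))
    _ ≤ 6 / (‖b‖ * M) := by have := norm_pos_iff.mpr hb; gcongr

theorem norm_truncGaussian_le (hb : 0 ≤ b.re) {ε : ℝ} (hε : 0 ≤ ε) :
    ‖truncGaussian b w ε‖ ≤ 2 * ε * Real.exp (‖w‖ * ε) := by
  have hpointwise (u : ℝ) (hu : u ∈ Ι (-ε) ε) :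
      ‖cexp (-b * u ^ 2 + w * u)‖ ≤ Real.exp (‖w‖ * ε) := by
    rw [uIoc_of_le (by linarith)] at hu
    have hgauss : (-b * u ^ 2 : ℂ).re ≤ 0 := by
      rw [← ofReal_pow, re_mul_ofReal, neg_re]
      have := mul_nonneg hb (sq_nonneg u)
      linarith
    have hlinear : (w * u).re ≤ ‖w‖ * ε := by
      refine (re_le_norm _).trans ?_
      rw [norm_mul, norm_real]
      gcongr
      exact abs_le.mpr ⟨hu.1.le, hu.2⟩
    rw [norm_exp, add_re]
    gcongr
    linarith
  calc _ ≤ Real.exp (‖w‖ * ε) * |ε - -ε| :=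
        intervalIntegral.norm_integral_le_of_norm_le_const hpointwise
    _ = 2 * ε * Real.exp (‖w‖ * ε) := by rw [abs_of_nonneg (by linarith)]; ring

theorem norm_setIntegral_pvDomain_sub_le (hb : b ≠ 0) {ε N : ℝ} (hε : 0 < ε) (hεN : ε ≤ N)
    (hre : |w.re| ≤ b.re * N) (hnorm : ‖w‖ ≤ ‖b‖ * N) :
    ‖(∫ u in pvDomain 0 ε N, cexp (-b * u ^ 2 + w * u) / u) -
        w * ∫ s in (0 : ℝ)..1, (π / b) ^ (1 / 2 : ℂ) * cexp ((s * w) ^ 2 / (4 * b))‖ ≤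
      ‖w‖ * (6 / (‖b‖ * N) + 2 * ε * Real.exp (‖w‖ * ε)) := by
  have hN : 0 < N := hε.trans_le hεN
  have hb_re : 0 ≤ b.re := nonneg_of_mul_nonneg_left ((abs_nonneg _).trans hre) hN
  have htrunc (M : ℝ) : Continuous fun s : ℝ ↦ truncGaussian b (s * w) M :=
    (continuous_truncGaussian M).comp (by fun_prop : Continuous fun s : ℝ ↦ (b, s * w))
  have hpointwise (s : ℝ) (hs : s ∈ Ι (0 : ℝ) 1) :
      ‖truncGaussian b (s * w) N - truncGaussian b (s * w) ε -
          (π / b) ^ (1 / 2 : ℂ) * cexp ((s * w) ^ 2 / (4 * b))‖ ≤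
        6 / (‖b‖ * N) + 2 * ε * Real.exp (‖w‖ * ε) := by
    rw [uIoc_of_le zero_le_one] at hs
    have hs_abs : |s| ≤ 1 := abs_le.mpr ⟨by linarith [hs.1], hs.2⟩
    have hsw_re : |(s * w).re| ≤ |w.re| := by
      rw [re_ofReal_mul, abs_mul]
      exact mul_le_of_le_one_left (abs_nonneg _) hs_abs
    have hsw_norm : ‖s * w‖ ≤ ‖w‖ := by
      rw [norm_mul, norm_real]
      exact mul_le_of_le_one_left (norm_nonneg _) hs_abs
    rw [sub_right_comm]
    refine norm_sub_le_of_le ?_ ((norm_truncGaussian_le hb_re hε.le).trans (by gcongr))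
    rw [norm_sub_rev]
    exact norm_sub_truncGaussian_le hb hN (hsw_re.trans hre) (hsw_norm.trans hnorm)
  rw [setIntegral_pvDomain_cexp_quadratic_div b w hε hεN, ← mul_sub, norm_mul,
    ← intervalIntegral.integral_sub (Continuous.intervalIntegrable (by fun_prop) _ _)
      (Continuous.intervalIntegrable (by fun_prop) _ _)]
  gcongr
  simpa using intervalIntegral.norm_integral_le_of_norm_le_const hpointwise

end Tail

theorem pi_div_cpow_half {b ζ : ℂ} (hζ : 0 < ζ.re) (hb : 4 * b * ζ ^ 2 = 1) :
    (π / b) ^ (1 / 2 : ℂ) = 2 * √π * ζ := by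
  have hb₀ : b ≠ 0 := by rintro rfl; simp at hb
  have hsq : (π / b : ℂ) = (2 * √π * ζ) ^ 2 := by
    have hπ : (√π : ℂ) ^ 2 = π := by rw [← ofReal_pow, Real.sq_sqrt Real.pi_pos.le]
    rw [mul_pow, mul_pow, hπ, div_eq_iff hb₀]
    linear_combination -(π : ℂ) * hb
  have hre : 0 < (2 * √π * ζ : ℂ).re := by
    rw [← ofReal_ofNat, ← ofReal_mul, re_ofReal_mul]
    positivity
  rw [hsq, one_div, sq_cpow_two_inv hre]

theorem mul_integral_eq_I_mul_pi_mul_cerf {b ζ : ℂ} (hζ : 0 < ζ.re) (hb : 4 * b * ζ ^ 2 = 1)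
    (z : ℂ) :
    I * z * ∫ s in (0 : ℝ)..1, (π / b) ^ (1 / 2 : ℂ) * cexp ((s * (I * z)) ^ 2 / (4 * b)) =
      I * π * cerf (ζ * z) := by
  have hb₀ : b ≠ 0 := by rintro rfl; simp at hb
  have hexponent (s : ℝ) : (s * (I * z)) ^ 2 / (4 * b) = -(s * (ζ * z)) ^ 2 := by
    rw [div_eq_iff (by simpa)]
    linear_combination (s * z) ^ 2 * I_sq + (s * z) ^ 2 * hb
  have hπ : (π : ℂ) = √π * √π := by rw [← ofReal_mul, Real.mul_self_sqrt Real.pi_pos.le]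
  have hπ₀ : (√π : ℂ) ≠ 0 := ofReal_ne_zero.mpr (Real.sqrt_pos.mpr Real.pi_pos).ne'
  simp_rw [hexponent, pi_div_cpow_half hζ hb, intervalIntegral.integral_const_mul, cerf]
  rw [hπ]
  field_simp

theorem tendsto_setIntegral_pvDomain_cexp_quadratic_div {b ζ z : ℂ} (hζ : 0 < ζ.re)
    (hb : 4 * b * ζ ^ 2 = 1) (hbz : 0 < b.re ∨ b.re = 0 ∧ z.im = 0) :
    Tendsto (fun p : ℝ × ℝ ↦ ∫ u in pvDomain 0 p.1 p.2, cexp (-b * u ^ 2 + I * z * u) / u)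
      (𝓝[>] 0 ×ˢ atTop) (𝓝 (I * π * cerf (ζ * z))) := by
  have hb₀ : b ≠ 0 := by rintro rfl; simp at hb
  have hb' : 0 < ‖b‖ := norm_pos_iff.mpr hb₀
  rw [← mul_integral_eq_I_mul_pi_mul_cerf hζ hb, tendsto_iff_norm_sub_tendsto_zero]
  have hre : ∀ᶠ N : ℝ in atTop, |(I * z).re| ≤ b.re * N := by
    rcases hbz with hpos | ⟨hzero, hz⟩
    · exact (tendsto_id.const_mul_atTop hpos).eventually_ge_atTop _
    · simp [hzero, hz]
  have hnorm : ∀ᶠ N : ℝ in atTop, ‖I * z‖ ≤ ‖b‖ * N :=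
    (tendsto_id.const_mul_atTop hb').eventually_ge_atTop _
  have hbound : Tendsto (fun p : ℝ × ℝ ↦
      ‖I * z‖ * (6 / (‖b‖ * p.2) + 2 * p.1 * Real.exp (‖I * z‖ * p.1)))
      (𝓝[>] 0 ×ˢ atTop) (𝓝 0) := by
    have hN : Tendsto (fun p : ℝ × ℝ ↦ 6 / (‖b‖ * p.2)) (𝓝[>] 0 ×ˢ atTop) (𝓝 0) :=
      (tendsto_snd.const_mul_atTop hb').const_div_atTop 6
    have hε : Tendsto (fun p : ℝ × ℝ ↦ 2 * p.1 * Real.exp (‖I * z‖ * p.1))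
        (𝓝[>] 0 ×ˢ atTop) (𝓝 0) := by
      have h : Continuous fun ε : ℝ ↦ 2 * ε * Real.exp (‖I * z‖ * ε) := by fun_prop
      exact (tendsto_nhdsWithin_of_tendsto_nhds (h.tendsto' 0 0 (by simp))).comp tendsto_fst
    simpa using (hN.add hε).const_mul ‖I * z‖
  refine squeeze_zero' (Eventually.of_forall fun _ ↦ norm_nonneg _) ?_ hbound
  filter_upwards [prod_mem_prod (Ioo_mem_nhdsGT one_pos)
    ((hre.and hnorm).and (eventually_ge_atTop 1))] with p ⟨hε, ⟨hre, hnorm⟩, hN⟩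
  exact norm_setIntegral_pvDomain_sub_le hb₀ hε.1 (hε.2.le.trans hN) hre hnorm

theorem four_mul_I_mul_mul_sq_eq_one {t : ℝ} (ht : t ≠ 0) :
    4 * (I * t) * (cexp (-(I * (π / 4) * Real.sign t)) / (2 * √|t|)) ^ 2 = 1 := by
  have hsq : (√|t| : ℂ) ^ 2 = Real.sign t * t := by
    rw [← ofReal_pow, Real.sq_sqrt (abs_nonneg t), ← ofReal_mul]
    rcases ht.lt_or_gt with h | h
    · simp [Real.sign_of_neg h, abs_of_neg h]
    · simp [Real.sign_of_pos h, abs_of_pos h]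
  have hrot : cexp (-(I * (π / 4) * Real.sign t)) ^ 2 = -I * Real.sign t := by
    rw [← Complex.exp_nat_mul]
    rcases ht.lt_or_gt with h | h
    · rw [Real.sign_of_neg h]
      convert exp_pi_div_two_mul_I using 2 <;> push_cast <;> ring
    · rw [Real.sign_of_pos h]
      convert exp_neg_pi_div_two_mul_I using 2 <;> push_cast <;> ring
  have ht₀ : (t : ℂ) ≠ 0 := ofReal_ne_zero.mpr ht
  have hsign₀ : (Real.sign t : ℂ) ≠ 0 := ofReal_ne_zero.mpr (Real.sign_eq_zero_iff.not.mpr ht)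
  rw [div_pow, mul_pow, hsq, hrot]
  field_simp
  linear_combination -4 * I_sq

theorem re_cexp_sign_div_pos {t : ℝ} (ht : t ≠ 0) :
    0 < (cexp (-(I * (π / 4) * Real.sign t)) / (2 * √|t|)).re := by
  have hexponent : -(I * (π / 4) * Real.sign t) = (-(π / 4 * Real.sign t) : ℝ) * I := by
    push_cast
    ring
  have hcos : Real.cos (-(π / 4 * Real.sign t)) = √2 / 2 := by
    rcases Real.sign_apply_eq_of_ne_zero t ht with h | h <;> simp [h]
  have hdenom : (2 * √|t| : ℂ) = (2 * √|t| : ℝ) := by push_cast; rfl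
  rw [hdenom, div_ofReal_re, hexponent, exp_ofReal_mul_I_re, hcos]
  positivity

theorem pv_chirped_gaussian_hilbert_general {x t ζ : ℂ} (k : ℝ) (hζ : 0 < ζ.re)
    (htζ : 4 * (I * t) * ζ ^ 2 = 1) (htx : t.im < 0 ∨ t.im = 0 ∧ x.im = 0) :
    Tendsto
      (fun p : ℝ × ℝ ↦ (1 / π : ℂ) *
        ∫ q in pvDomain k p.1 p.2, cexp (-(I * q ^ 2 * t) + I * q * x) / (q - k))
      (𝓝[>] 0 ×ˢ atTop)
      (𝓝 (I * cerf (ζ * (x - 2 * k * t)) * cexp (-(I * k ^ 2 * t) + I * k * x))) := by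
  have hshift (p : ℝ × ℝ) :
      ∫ q in pvDomain k p.1 p.2, cexp (-(I * q ^ 2 * t) + I * q * x) / (q - k) =
        cexp (-(I * k ^ 2 * t) + I * k * x) *
          ∫ u in pvDomain 0 p.1 p.2, cexp (-(I * t) * u ^ 2 + I * (x - 2 * k * t) * u) / u := by
    rw [setIntegral_pvDomain_eq_comp_add, ← integral_const_mul]
    congr with u
    rw [← mul_div_assoc, ← Complex.exp_add]
    push_cast
    ring_nf
  have hdecay : 0 < (I * t).re ∨ (I * t).re = 0 ∧ (x - 2 * k * t).im = 0 := by
    rcases htx with h | ⟨ht, hx⟩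
    · simp [h]
    · simp [ht, hx]
  have hlim := ((tendsto_setIntegral_pvDomain_cexp_quadratic_div hζ htζ hdecay).const_mul
    (cexp (-(I * k ^ 2 * t) + I * k * x))).const_mul (1 / π : ℂ)
  simp_rw [← hshift] at hlim
  have hπ₀ : (π : ℂ) ≠ 0 := ofReal_ne_zero.mpr Real.pi_ne_zero
  convert hlim using 2
  field_simp

theorem tendsto_one_div_add_one_prodMk_natCast :
    Tendsto (fun n : ℕ ↦ (1 / (n + 1 : ℝ), (n : ℝ))) atTop (𝓝[>] 0 ×ˢ atTop) :=
  .prodMk (tendsto_nhdsWithin_iff.mpr ⟨tendsto_one_div_add_atTop_nhds_zero_nat,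
    .of_forall fun _ ↦ mem_Ioi.mpr Nat.one_div_pos_of_nat⟩) tendsto_natCast_atTop_atTop

end

/-- `(1/π) p.v. ∫ e^{-iq²t + iqx}/(q-k) dq = i erf(ζ(x - 2kt)) e^{-ik²t + ikx}`
with `ζ = e^{-i(π/4) sgn t}/(2√|t|)`, for real `x, k` and `t ≠ 0`; the principal
value is the symmetric limit cutting out `|q-k| < 1/(n+1)` and `|q-k| > n`. -/
theorem pv_chirped_gaussian_hilbert (x t k : ℝ) (ht : t ≠ 0) :
    Tendsto
      (fun n : ℕ =>
        (1 / Real.pi : ℂ) *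
          ∫ q in {q : ℝ | 1 / (n + 1 : ℝ) ≤ |q - k| ∧ |q - k| ≤ n},
            Complex.exp (-(Complex.I * q ^ 2 * t) + Complex.I * q * x) / (q - k))
      atTop
      (nhds (Complex.I *
          cerf ((Complex.exp (-(Complex.I * (Real.pi / 4) * Real.sign t))
                  / (2 * Real.sqrt |t|)) * ((x : ℂ) - 2 * k * t)) *
          Complex.exp (-(Complex.I * k ^ 2 * t) + Complex.I * k * x))) := by
  have hpv := pv_chirped_gaussian_hilbert_general (x := x) (t := t) k (re_cexp_sign_div_pos ht)
    (four_mul_I_mul_mul_sq_eq_one ht) (.inr ⟨Complex.ofReal_im t, Complex.ofReal_im x⟩)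
  have hpv_nat := hpv.comp tendsto_one_div_add_one_prodMk_natCast
  exact hpv_nat
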